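/- Let C be a self-dual ℤ₄-code of length 37 such that the residue code C⁽¹⁾ is a binary doubly even [37,6,12] code and the torsion code C⁽²⁾ has minimum weight 3. Then A₄(C) is an (odd) unimodular lattice with min(A₄(C)) = 3 and kissing number at least 1120. -/

import Mathlib

open scoped RealInnerProductSpace

noncomputable section

/-- The norm `(x, x)` of a vector `x ∈ ℝⁿ` (squared Euclidean length). -/
def normOf {n : ℕ} (x : EuclideanSpace ℝ (Fin n)) : ℝ := ⟪x, x⟫

/-- The dual `L* = {x ∈ ℝⁿ : (x,y) ∈ ℤ for all y ∈ L}` of a set of vectors. -/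
def dualSet {n : ℕ} (L : Set (EuclideanSpace ℝ (Fin n))) : Set (EuclideanSpace ℝ (Fin n)) :=
  {x | ∀ y ∈ L, ∃ m : ℤ, ⟪x, y⟫ = (m : ℝ)}

/-- `L` is a unimodular lattice: `L = L*`. -/
def IsUnimodularLattice {n : ℕ} (L : Set (EuclideanSpace ℝ (Fin n))) : Prop :=
  L = dualSet L

/-- `L` is odd: some vector of `L` has odd (integral) norm. -/
def IsOddLattice {n : ℕ} (L : Set (EuclideanSpace ℝ (Fin n))) : Prop :=
  ∃ x ∈ L, ∃ m : ℤ, Odd m ∧ normOf x = (m : ℝ)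

/-- The even sublattice `L₀ = {x ∈ L : (x,x) even}`. -/
def evenSublattice {n : ℕ} (L : Set (EuclideanSpace ℝ (Fin n))) :
    Set (EuclideanSpace ℝ (Fin n)) :=
  {x | x ∈ L ∧ ∃ m : ℤ, normOf x = 2 * (m : ℝ)}

/-- The shadow `S(L) = L₀* \ L`. -/
def shadow {n : ℕ} (L : Set (EuclideanSpace ℝ (Fin n))) : Set (EuclideanSpace ℝ (Fin n)) :=
  dualSet (evenSublattice L) \ L

/-- `L` has minimum norm `r`: `r` is the least norm among nonzero vectors of `L`. -/
def HasMinNorm {n : ℕ} (L : Set (EuclideanSpace ℝ (Fin n))) (r : ℝ) : Prop :=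
  IsLeast {s : ℝ | ∃ x ∈ L, x ≠ 0 ∧ normOf x = s} r

/-- The shadow `S(L)` has minimum norm `r`. -/
def HasShadowMinNorm {n : ℕ} (L : Set (EuclideanSpace ℝ (Fin n))) (r : ℝ) : Prop :=
  IsLeast {s : ℝ | ∃ x ∈ shadow L, normOf x = s} r

/-- `σ(L) = r`, i.e. `4 · min(S(L)) = r`. -/
def HasSigma {n : ℕ} (L : Set (EuclideanSpace ℝ (Fin n))) (r : ℝ) : Prop :=
  ∃ s : ℝ, HasShadowMinNorm L s ∧ r = 4 * s

/-- The number of vectors of norm `r` in `L`; when `L` has minimum norm `r`,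
this is the kissing number of `L`. -/
def numVecsOfNorm {n : ℕ} (L : Set (EuclideanSpace ℝ (Fin n))) (r : ℝ) : ℕ :=
  Set.ncard {x ∈ L | normOf x = r}

/-- The dual code `B⊥ = {x ∈ F₂ⁿ : x·y = 0 for all y ∈ B}`. -/
def dualCode {n : ℕ} (B : Submodule (ZMod 2) (Fin n → ZMod 2)) : Set (Fin n → ZMod 2) :=
  {x | ∀ y ∈ B, ∑ i, x i * y i = 0}

/-- A binary code is doubly even if every codeword has Hamming weight divisible by 4. -/
def IsDoublyEven {n : ℕ} (B : Submodule (ZMod 2) (Fin n → ZMod 2)) : Prop :=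
  ∀ c ∈ B, 4 ∣ hammingNorm c

/-- A set of binary words has minimum weight `d`:
`d` is the least Hamming weight among its nonzero elements. -/
def HasMinWeight {n : ℕ} (S : Set (Fin n → ZMod 2)) (d : ℕ) : Prop :=
  IsLeast {w : ℕ | ∃ c ∈ S, c ≠ 0 ∧ hammingNorm c = w} d

/-- The number of words of Hamming weight `w` in `S`. -/
def weightCount {n : ℕ} (S : Set (Fin n → ZMod 2)) (w : ℕ) : ℕ :=
  Set.ncard {c ∈ S | hammingNorm c = w}

/-- The dual of a `ℤ₄`-code: `C⊥ = {x ∈ ℤ₄ⁿ : x·y = 0 for all y ∈ C}`. -/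
def dualZ4 {n : ℕ} (C : Submodule (ZMod 4) (Fin n → ZMod 4)) : Set (Fin n → ZMod 4) :=
  {x | ∀ y ∈ C, ∑ i, x i * y i = 0}

/-- Reduction modulo 2 of a `ℤ₄`-word. -/
def toBinary {n : ℕ} (c : Fin n → ZMod 4) : Fin n → ZMod 2 :=
  fun i => ZMod.castHom (by norm_num : (2 : ℕ) ∣ 4) (ZMod 2) (c i)

/-- The residue code `C⁽¹⁾ = {c mod 2 : c ∈ C}`. -/
def residueCode {n : ℕ} (C : Submodule (ZMod 4) (Fin n → ZMod 4)) : Set (Fin n → ZMod 2) :=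
  {b | ∃ c ∈ C, b = toBinary c}

/-- The torsion code `C⁽²⁾ = {c mod 2 : c ∈ ℤ₄ⁿ, 2c ∈ C}`. -/
def torsionCode {n : ℕ} (C : Submodule (ZMod 4) (Fin n → ZMod 4)) : Set (Fin n → ZMod 2) :=
  {b | ∃ c : Fin n → ZMod 4, (2 : ZMod 4) • c ∈ C ∧ b = toBinary c}

/-- Construction A: `A₄(C) = (1/2)·{x ∈ ℤⁿ : (x mod 4) ∈ C}`. -/
def constructionA4 {n : ℕ} (C : Submodule (ZMod 4) (Fin n → ZMod 4)) :
    Set (EuclideanSpace ℝ (Fin n)) :=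
  {v | ∃ x : Fin n → ℤ, (fun i => (x i : ZMod 4)) ∈ C ∧ ∀ i, v i = (x i : ℝ) / 2}

/-!
Self-duality makes the torsion code of `C` the dual of its residue code `B`. A nonzero vector of
`A₄(C)` is `x / 2` with `x` integral. If `x` is odd somewhere, its norm is at least a quarter of
the weight of a residue word; if `x = 2y` with `y` odd somewhere, its norm is at least the weight
of a torsion word; otherwise `x ∈ 4ℤⁿ` and its norm is at least `4`. Distributing signs on the
support of a torsion word of weight `3` gives `8` vectors of norm `3`, so the kissing number is at
least `8 * 140` once `B⊥` is known to have `140` words of weight `3`.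

For this count, put `m(c) = ∑ᵢ (-1)^{cᵢ} = 37 - 2 wt(c)`. As `B⊥` has no words of weight `1` or
`2`, the MacWilliams identity gives `∑ m = 0`, `∑ m² = 64 * 37` and `∑ m³ = 64 * 6 * A₃(B⊥)`, the
sums running over `B`. Double evenness forces `m ≡ 5 (mod 8)`, hence `(m - 5)(m + 3) ≥ 0`, while
`∑ (m - 5)(m + 3) = 1408 = 1280 + 128` is already the contribution of the zero word and of one
word of weight `12`. All other words therefore have `m = 5` or `m = -3`, so that
`(m - 5)(m + 3)(m - 13)` vanishes off the zero word, and the sum of this cubic yields `A₃(B⊥)`.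
-/

section Weights

variable {n : ℕ}

theorem hammingNorm_le (c : Fin n → ZMod 2) : hammingNorm c ≤ n := by
  simpa using hammingNorm_le_card_fintype (x := c)

theorem card_eq_two_pow_finrank (B : Submodule (ZMod 2) (Fin n → ZMod 2)) [Fintype B] :
    Fintype.card B = 2 ^ Module.finrank (ZMod 2) B := by
  rw [Module.card_eq_pow_finrank (K := ZMod 2), ZMod.card]

theorem weightCount_eq_card (S : Set (Fin n → ZMod 2)) [DecidablePred (· ∈ S)] (w : ℕ) :
    weightCount S w = (Finset.univ.filter fun c => c ∈ S ∧ hammingNorm c = w).card := by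
  rw [weightCount, ← Set.ncard_coe_finset]
  congr 1
  ext c
  simp

theorem HasMinWeight.le_hammingNorm {S : Set (Fin n → ZMod 2)} {d : ℕ} (h : HasMinWeight S d)
    {c : Fin n → ZMod 2} (hc : c ∈ S) (hc₀ : c ≠ 0) : d ≤ hammingNorm c :=
  h.2 ⟨c, hc, hc₀, rfl⟩

theorem HasMinWeight.weightCount_eq_zero {S : Set (Fin n → ZMod 2)} {d w : ℕ}
    (h : HasMinWeight S d) (hw₀ : w ≠ 0) (hw : w < d) : weightCount S w = 0 := by
  have hempty : {c ∈ S | hammingNorm c = w} = ∅ :=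
    Set.eq_empty_of_forall_notMem fun c hc => hw.not_ge <|
      hc.2 ▸ h.le_hammingNorm hc.1 (hammingNorm_ne_zero_iff.1 (hc.2 ▸ hw₀))
  rw [weightCount, hempty, Set.ncard_empty]

end Weights

section MacWilliams

open Polynomial

variable {n : ℕ}

/-- The nontrivial additive character of `ZMod 2`, with values in `ℤ`. -/
def signChar : AddChar (ZMod 2) ℤ :=
  AddChar.zmodChar 2 (by norm_num : (-1 : ℤ) ^ 2 = 1)

theorem signChar_one : signChar 1 = -1 := rfl

theorem signChar_eq_one_iff {a : ZMod 2} : signChar a = 1 ↔ a = 0 := by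
  revert a
  decide

open Classical in
theorem sum_signChar_dotProduct (B : Submodule (ZMod 2) (Fin n → ZMod 2)) [Fintype B]
    (x : Fin n → ZMod 2) :
    ∑ c : B, signChar (x ⬝ᵥ c) = if x ∈ dualCode B then (Fintype.card B : ℤ) else 0 := by
  let ψ : AddChar B ℤ := signChar.compAddMonoidHom
    (dotProductBilin (ZMod 2) (ZMod 2) x ∘ₗ B.subtype).toAddMonoidHom
  have hψ : ψ = 0 ↔ x ∈ dualCode B :=
    calc ψ = 0 ↔ ∀ c : B, signChar (x ⬝ᵥ c) = 1 := DFunLike.ext_iff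
      _ ↔ ∀ c ∈ B, x ⬝ᵥ c = 0 := by simp only [signChar_eq_one_iff, Subtype.forall]
  calc ∑ c : B, signChar (x ⬝ᵥ c) = ∑ c, ψ c := rfl
    _ = _ := by simp only [AddChar.sum_eq_ite, hψ]

/-- The generating function `∑ⱼ Kⱼ(w) Xʲ` of the values at `w` of the Krawtchouk polynomials
of length `n`. It has this meaning only for `w ≤ n`, as `n - w` is a truncated subtraction. -/
def krawtchoukGen (n w : ℕ) : ℤ[X] := (1 - X) ^ w * (1 + X) ^ (n - w)

theorem krawtchoukGen_hammingNorm (c : Fin n → ZMod 2) :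
    krawtchoukGen n (hammingNorm c) =
      ∑ x : Fin n → ZMod 2, C (signChar (x ⬝ᵥ c)) * X ^ hammingNorm x := by
  have hfactor (b : ZMod 2) : ∑ a : ZMod 2, C (signChar (a * b)) * X ^ (if a ≠ 0 then 1 else 0) =
      if b ≠ 0 then (1 - X : ℤ[X]) else 1 + X := by
    have huniv : (Finset.univ : Finset (ZMod 2)) = {0, 1} := rfl
    rw [huniv, Finset.sum_pair zero_ne_one]
    obtain rfl | rfl : b = 0 ∨ b = 1 := by revert b; decide
    · simp
    · simp [signChar_one, sub_eq_add_neg]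
  have hsum (x : Fin n → ZMod 2) : signChar (∑ i, x i * c i) = ∏ i, signChar (x i * c i) :=
    map_prod signChar.toMonoidHom (fun i => Multiplicative.ofAdd (x i * c i)) Finset.univ
  have hterm (x : Fin n → ZMod 2) :
      ∏ i, C (signChar (x i * c i)) * X ^ (if x i ≠ 0 then 1 else 0) =
        C (signChar (x ⬝ᵥ c)) * X ^ hammingNorm x := by
    rw [Finset.prod_mul_distrib, Finset.prod_pow_eq_pow_sum, ← Finset.card_filter, ← map_prod,
      ← hsum]
    rfl
  have hzeros : (Finset.univ.filter fun i => ¬c i ≠ 0).card = n - hammingNorm c := by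
    have h := Finset.card_filter_add_card_filter_not (s := Finset.univ) (fun i => c i ≠ 0)
    rw [Finset.card_univ, Fintype.card_fin] at h
    exact Nat.eq_sub_of_add_eq' h
  calc krawtchoukGen n (hammingNorm c) = ∏ i, if c i ≠ 0 then (1 - X : ℤ[X]) else 1 + X := by
        rw [Finset.prod_ite, Finset.prod_const, Finset.prod_const, hzeros]
        rfl
    _ = ∏ i, ∑ a : ZMod 2, C (signChar (a * c i)) * X ^ (if a ≠ 0 then 1 else 0) := by
        simp only [hfactor]
    _ = _ := by rw [Fintype.prod_sum]; simp only [hterm]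

theorem macWilliams_identity (B : Submodule (ZMod 2) (Fin n → ZMod 2)) [Fintype B] (j : ℕ) :
    ∑ c : B, (krawtchoukGen n (hammingNorm c.1)).coeff j =
      Fintype.card B * weightCount (dualCode B) j := by
  classical
  simp only [krawtchoukGen_hammingNorm, finsetSum_coeff, coeff_C_mul, coeff_X_pow]
  rw [Finset.sum_comm]
  simp only [← Finset.sum_mul, sum_signChar_dotProduct]
  rw [weightCount_eq_card, Finset.card_filter]
  push_cast
  rw [Finset.mul_sum]
  refine Finset.sum_congr rfl fun x _ => ?_
  split_ifs <;> simp_all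

theorem derivative_krawtchoukGen {w : ℕ} (hw : w ≤ n) :
    (1 - X ^ 2) * derivative (krawtchoukGen n w) =
      (C (n - 2 * w : ℤ) - C (n : ℤ) * X) * krawtchoukGen n w := by
  have hpow (p : ℤ[X]) (k : ℕ) : p * derivative (p ^ k) = C (k : ℤ) * p ^ k * derivative p := by
    cases k with
    | zero => simp
    | succ k => rw [derivative_pow_succ]; push_cast; ring
  have h₁ := hpow (1 - X) w
  have h₂ := hpow (1 + X) (n - w)
  simp only [map_sub, map_add, derivative_one, derivative_X, Nat.cast_sub hw] at h₁ h₂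
  rw [krawtchoukGen, derivative_mul]
  simp only [map_sub, map_mul, map_ofNat]
  linear_combination (1 + X) ^ (n - w) * (1 + X) * h₁ + (1 - X) ^ w * (1 - X) * h₂

theorem coeff_krawtchoukGen_zero (n w : ℕ) : (krawtchoukGen n w).coeff 0 = 1 := by
  simp [krawtchoukGen, coeff_zero_eq_eval_zero]

theorem coeff_krawtchoukGen_one {w : ℕ} (hw : w ≤ n) :
    (krawtchoukGen n w).coeff 1 = n - 2 * w := by
  have h := congrArg (coeff · 0) (derivative_krawtchoukGen hw)
  simpa [mul_coeff_zero, coeff_derivative, coeff_krawtchoukGen_zero] using h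

theorem coeff_krawtchoukGen_add_two {w : ℕ} (hw : w ≤ n) (j : ℕ) :
    (j + 2) * (krawtchoukGen n w).coeff (j + 2) =
      (n - 2 * w) * (krawtchoukGen n w).coeff (j + 1) - (n - j) * (krawtchoukGen n w).coeff j := by
  have h := congrArg (coeff · (j + 1)) (derivative_krawtchoukGen hw)
  have hcoeff : (X ^ 2 * derivative (krawtchoukGen n w)).coeff (j + 1) =
      j * (krawtchoukGen n w).coeff j := by
    cases j with
    | zero => simp [coeff_X_pow_mul']
    | succ j => rw [coeff_X_pow_mul, coeff_derivative]; push_cast; ring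
  simp only [sub_mul, one_mul, mul_assoc, coeff_sub, coeff_C_mul, coeff_X_mul, coeff_derivative,
    hcoeff] at h
  push_cast at h
  linear_combination h

theorem two_mul_coeff_krawtchoukGen_two {w : ℕ} (hw : w ≤ n) :
    2 * (krawtchoukGen n w).coeff 2 = (n - 2 * w) ^ 2 - n := by
  have h := coeff_krawtchoukGen_add_two hw 0
  rw [coeff_krawtchoukGen_one hw, coeff_krawtchoukGen_zero] at h
  push_cast at h
  linear_combination h

theorem six_mul_coeff_krawtchoukGen_three {w : ℕ} (hw : w ≤ n) :
    6 * (krawtchoukGen n w).coeff 3 = (n - 2 * w) ^ 3 - (3 * n - 2) * (n - 2 * w) := by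
  have h := coeff_krawtchoukGen_add_two hw 1
  rw [coeff_krawtchoukGen_one hw] at h
  push_cast at h
  linear_combination 2 * h + (n - 2 * w : ℤ) * two_mul_coeff_krawtchoukGen_two hw

/-- The sum `∑ᵢ (-1)^{cᵢ}` attached to a binary word, expressed through its weight. The values
at `c` of the Krawtchouk polynomials are polynomials in it. -/
def signSum (c : Fin n → ZMod 2) : ℤ := n - 2 * hammingNorm c

theorem sum_signSum (B : Submodule (ZMod 2) (Fin n → ZMod 2)) [Fintype B] :
    ∑ c : B, signSum c.1 = Fintype.card B * weightCount (dualCode B) 1 := by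
  rw [← macWilliams_identity]
  exact Finset.sum_congr rfl fun c _ => (coeff_krawtchoukGen_one (hammingNorm_le _)).symm

theorem sum_signSum_sq (B : Submodule (ZMod 2) (Fin n → ZMod 2)) [Fintype B] :
    ∑ c : B, signSum c.1 ^ 2 =
      Fintype.card B * (n + 2 * weightCount (dualCode B) 2) := by
  have hterm (c : B) : signSum c.1 ^ 2 =
      n + 2 * (krawtchoukGen n (hammingNorm c.1)).coeff 2 := by
    rw [two_mul_coeff_krawtchoukGen_two (hammingNorm_le _), signSum]
    ring
  simp only [hterm, Finset.sum_add_distrib, ← Finset.mul_sum, macWilliams_identity,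
    Finset.sum_const, Finset.card_univ, nsmul_eq_mul]
  ring

theorem sum_signSum_cube (B : Submodule (ZMod 2) (Fin n → ZMod 2)) [Fintype B] :
    ∑ c : B, signSum c.1 ^ 3 =
      Fintype.card B *
        ((3 * n - 2) * weightCount (dualCode B) 1 + 6 * weightCount (dualCode B) 3) := by
  have hterm (c : B) : signSum c.1 ^ 3 =
      (3 * n - 2) * signSum c.1 +
        6 * (krawtchoukGen n (hammingNorm c.1)).coeff 3 := by
    rw [six_mul_coeff_krawtchoukGen_three (hammingNorm_le _), signSum]
    ring
  simp only [hterm, Finset.sum_add_distrib, ← Finset.mul_sum, macWilliams_identity, sum_signSum]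
  ring

end MacWilliams

section Length37

variable {B : Submodule (ZMod 2) (Fin 37 → ZMod 2)}

theorem signSum_sub_five_mul_add_three_nonneg {c : Fin 37 → ZMod 2} (hc : 4 ∣ hammingNorm c) :
    0 ≤ (signSum c - 5) * (signSum c + 3) := by
  obtain ⟨k, hk⟩ := hc
  have hfactor : (signSum c - 5) * (signSum c + 3) = 64 * (((k : ℤ) - 4) * (k - 5)) := by
    rw [signSum, hk]
    push_cast
    ring
  have hconsec : 0 ≤ ((k : ℤ) - 4) * (k - 5) := by
    rcases le_or_gt (k : ℤ) 4 with h | h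
    · exact mul_nonneg_of_nonpos_of_nonpos (by linarith) (by linarith)
    · exact mul_nonneg (by linarith) (by linarith [Int.add_one_le_iff.2 h])
  linarith

theorem sum_signSum_sub_five_mul_add_three [Fintype B] (hdim : Module.finrank (ZMod 2) B = 6)
    (h₁ : weightCount (dualCode B) 1 = 0) (h₂ : weightCount (dualCode B) 2 = 0) :
    ∑ c : B, (signSum c.1 - 5) * (signSum c.1 + 3) = 1408 := by
  have hexpand (c : B) : (signSum c.1 - 5) * (signSum c.1 + 3) =
      signSum c.1 ^ 2 - 2 * signSum c.1 - 15 := by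
    ring
  simp only [hexpand, Finset.sum_sub_distrib, ← Finset.mul_sum, sum_signSum, sum_signSum_sq,
    h₁, h₂, card_eq_two_pow_finrank, hdim, Finset.sum_const, Finset.card_univ]
  norm_num

theorem hammingNorm_eq_sixteen_or_twenty (hdim : Module.finrank (ZMod 2) B = 6)
    (hde : IsDoublyEven B) (h₁ : weightCount (dualCode B) 1 = 0)
    (h₂ : weightCount (dualCode B) 2 = 0) {b c : B} (hb : hammingNorm b.1 = 12) (hc₀ : c ≠ 0)
    (hcb : c ≠ b) : hammingNorm c.1 = 16 ∨ hammingNorm c.1 = 20 := by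
  classical
  let : Fintype B := Fintype.ofFinite B
  let f (c : B) : ℤ := (signSum c.1 - 5) * (signSum c.1 + 3)
  have hf (c : B) : 0 ≤ f c := signSum_sub_five_mul_add_three_nonneg (hde c c.2)
  have hf₀ : f 0 = 1280 := by simp [f, signSum]
  have hfb : f b = 128 := by simp [f, signSum, hb]
  have hb₀ : (0 : B) ≠ b := by
    rintro rfl
    simp at hb
  have hle : ∑ x ∈ {0, b, c}, f x ≤ 1408 :=
    sum_signSum_sub_five_mul_add_three hdim h₁ h₂ ▸ Finset.sum_le_univ_sum_of_nonneg hf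
  rw [Finset.sum_insert (by simp [hb₀, hc₀.symm]), Finset.sum_pair hcb.symm, hf₀, hfb] at hle
  have hfc : f c = 0 := le_antisymm (by linarith) (hf c)
  rcases mul_eq_zero.1 hfc with h | h <;> rw [signSum] at h <;> omega

theorem weightCount_dualCode_three (hdim : Module.finrank (ZMod 2) B = 6)
    (hde : IsDoublyEven B) (h₁ : weightCount (dualCode B) 1 = 0)
    (h₂ : weightCount (dualCode B) 2 = 0) {b : Fin 37 → ZMod 2} (hbB : b ∈ B)
    (hb : hammingNorm b = 12) : weightCount (dualCode B) 3 = 140 := by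
  let : Fintype B := Fintype.ofFinite B
  let g (c : B) : ℤ := (signSum c.1 - 5) * (signSum c.1 + 3) * (signSum c.1 - 13)
  have hg₀ : g 0 = 30720 := by simp [g, signSum]
  have hg (c : B) (hc₀ : c ≠ 0) : g c = 0 := by
    have hweight : hammingNorm c.1 = 12 ∨ hammingNorm c.1 = 16 ∨ hammingNorm c.1 = 20 := by
      obtain rfl | hcb := eq_or_ne c ⟨b, hbB⟩
      · exact .inl hb
      · exact .inr (hammingNorm_eq_sixteen_or_twenty hdim hde h₁ h₂ hb hc₀ hcb)
    rcases hweight with h | h | h <;> simp [g, signSum, h]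
  have hsum : ∑ c, g c = 30720 := hg₀ ▸ Fintype.sum_eq_single 0 hg
  have hexpand (c : B) : g c =
      signSum c.1 ^ 3 - 15 * signSum c.1 ^ 2 + 11 * signSum c.1 + 195 := by
    simp only [g]
    ring
  simp only [hexpand, Finset.sum_add_distrib, Finset.sum_sub_distrib, ← Finset.mul_sum,
    sum_signSum, sum_signSum_sq, sum_signSum_cube, h₁, h₂, card_eq_two_pow_finrank, hdim,
    Finset.sum_const, Finset.card_univ, nsmul_eq_mul] at hsum
  push_cast at hsum
  have hcount : (weightCount (dualCode B) 3 : ℤ) = 140 := by linarith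
  exact mod_cast hcount

end Length37

section Lattice

variable {n : ℕ} {C : Submodule (ZMod 4) (Fin n → ZMod 4)}

/-- The vector `x / 2` of `(1/2)ℤⁿ`, in terms of which Construction A is phrased. -/
def halfVec (x : Fin n → ℤ) : EuclideanSpace ℝ (Fin n) := WithLp.toLp 2 fun i => (x i : ℝ) / 2

theorem halfVec_injective : Function.Injective (halfVec (n := n)) := by
  intro x y h
  funext i
  have hi : (x i : ℝ) / 2 = y i / 2 := congrArg (fun v : EuclideanSpace ℝ (Fin n) => v i) h
  exact_mod_cast (div_left_inj' two_ne_zero).1 hi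

theorem mem_constructionA4_iff {v : EuclideanSpace ℝ (Fin n)} :
    v ∈ constructionA4 C ↔
      ∃ x : Fin n → ℤ, (fun i => (x i : ZMod 4)) ∈ C ∧ halfVec x = v := by
  refine exists_congr fun x => and_congr_right fun _ => ⟨fun h => ?_, ?_⟩
  · ext i
    exact (h i).symm
  · rintro rfl i
    rfl

theorem inner_halfVec (x y : Fin n → ℤ) :
    ⟪halfVec x, halfVec y⟫ = ((∑ i, x i * y i : ℤ) : ℝ) / 4 := by
  simp only [PiLp.inner_apply, halfVec, RCLike.inner_apply, conj_trivial]
  push_cast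
  rw [Finset.sum_div]
  exact Finset.sum_congr rfl fun i _ => by ring

theorem normOf_halfVec (x : Fin n → ℤ) : normOf (halfVec x) = ((∑ i, x i ^ 2 : ℤ) : ℝ) / 4 := by
  simp only [normOf, inner_halfVec, sq]

theorem exists_inner_halfVec_eq_intCast_iff (x y : Fin n → ℤ) :
    (∃ m : ℤ, ⟪halfVec x, halfVec y⟫ = (m : ℝ)) ↔
      ∑ i, (x i : ZMod 4) * (y i : ZMod 4) = 0 := by
  have hcast : ∑ i, (x i : ZMod 4) * (y i : ZMod 4) = ((∑ i, x i * y i : ℤ) : ZMod 4) := by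
    push_cast
    rfl
  rw [hcast, ZMod.intCast_zmod_eq_zero_iff_dvd]
  refine exists_congr fun m => ?_
  rw [inner_halfVec, div_eq_iff four_ne_zero, mul_comm (m : ℝ)]
  exact_mod_cast Iff.rfl

theorem exists_halfVec_eq_of_mem_dualSet {v : EuclideanSpace ℝ (Fin n)}
    (hv : v ∈ dualSet (constructionA4 C)) : ∃ x : Fin n → ℤ, halfVec x = v := by
  have hint (i : Fin n) : ∃ m : ℤ, (m : ℝ) / 2 = v i := by
    have hmem : halfVec (Pi.single i 4) ∈ constructionA4 C := by
      refine mem_constructionA4_iff.2 ⟨_, ?_, rfl⟩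
      convert C.zero_mem with j
      obtain rfl | h := eq_or_ne j i
      · rw [Pi.single_eq_same]
        rfl
      · simp [h]
    obtain ⟨m, hm⟩ := hv _ hmem
    refine ⟨m, ?_⟩
    have hinner : ⟪v, halfVec (Pi.single i 4)⟫ = 2 * v i := by
      rw [PiLp.inner_apply, Finset.sum_eq_single i]
      · norm_num [halfVec]
      · intro j _ hj
        simp [halfVec, hj]
      · simp
    rw [← hm, hinner, mul_div_cancel_left₀ _ two_ne_zero]
  choose x hx using hint
  exact ⟨x, by ext i; exact hx i⟩

theorem isUnimodularLattice_constructionA4 (hsd : (C : Set (Fin n → ZMod 4)) = dualZ4 C) :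
    IsUnimodularLattice (constructionA4 C) := by
  have hmem (x : Fin n → ZMod 4) : x ∈ C ↔ ∀ y ∈ C, ∑ i, x i * y i = 0 := Set.ext_iff.1 hsd x
  refine Set.Subset.antisymm (fun v hv w hw => ?_) fun v hv => ?_
  · obtain ⟨x, hx, rfl⟩ := mem_constructionA4_iff.1 hv
    obtain ⟨y, hy, rfl⟩ := mem_constructionA4_iff.1 hw
    exact (exists_inner_halfVec_eq_intCast_iff x y).2 ((hmem _).1 hx _ hy)
  · obtain ⟨x, rfl⟩ := exists_halfVec_eq_of_mem_dualSet hv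
    refine mem_constructionA4_iff.2 ⟨x, (hmem _).2 fun y hy => ?_, rfl⟩
    choose z hz using fun i => ZMod.intCast_surjective (y i)
    obtain rfl : (fun i => (z i : ZMod 4)) = y := funext hz
    exact (exists_inner_halfVec_eq_intCast_iff x z).1 (hv _ (mem_constructionA4_iff.2 ⟨z, hy, rfl⟩))

theorem finite_setOf_mem_constructionA4_normOf_eq (C : Submodule (ZMod 4) (Fin n → ZMod 4))
    (r : ℝ) : {v ∈ constructionA4 C | normOf v = r}.Finite := by
  refine ((Set.finite_Icc (fun _ : Fin n => -⌊4 * r⌋) fun _ => ⌊4 * r⌋).image halfVec).subset ?_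
  rintro v ⟨hv, hr⟩
  obtain ⟨x, -, rfl⟩ := mem_constructionA4_iff.1 hv
  rw [normOf_halfVec, div_eq_iff four_ne_zero, mul_comm] at hr
  have habs (i : Fin n) : |x i| ≤ ⌊4 * r⌋ := by
    rw [← hr, Int.floor_intCast]
    calc |x i| ≤ x i ^ 2 := sq_abs (x i) ▸ Int.le_self_sq |x i|
      _ ≤ ∑ j, x j ^ 2 := Finset.single_le_sum (f := fun j => x j ^ 2)
          (fun j _ => sq_nonneg (x j)) (Finset.mem_univ i)
  exact ⟨x, ⟨fun i => (abs_le.1 (habs i)).1, fun i => (abs_le.1 (habs i)).2⟩, rfl⟩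

end Lattice

section TorsionCode

variable {n : ℕ} {C : Submodule (ZMod 4) (Fin n → ZMod 4)}

theorem toBinary_intCast (x : Fin n → ℤ) :
    toBinary (fun i => (x i : ZMod 4)) = fun i => (x i : ZMod 2) := by
  funext i
  exact map_intCast _ (x i)

theorem two_smul_eq_two_smul_iff_toBinary_eq {c d : Fin n → ZMod 4} :
    (2 : ZMod 4) • c = (2 : ZMod 4) • d ↔ toBinary c = toBinary d := by
  have h : ∀ a b : ZMod 4, 2 * a = 2 * b ↔
      ZMod.castHom (by norm_num : (2 : ℕ) ∣ 4) (ZMod 2) a =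
        ZMod.castHom (by norm_num : (2 : ℕ) ∣ 4) (ZMod 2) b := by decide
  simp only [funext_iff, Pi.smul_apply, smul_eq_mul, h, toBinary]

theorem toBinary_mem_torsionCode_iff {c : Fin n → ZMod 4} :
    toBinary c ∈ torsionCode C ↔ (2 : ZMod 4) • c ∈ C := by
  refine ⟨?_, fun hc => ⟨c, hc, rfl⟩⟩
  rintro ⟨d, hd, hcd⟩
  rwa [two_smul_eq_two_smul_iff_toBinary_eq.2 hcd]

theorem intCast_mem_torsionCode_iff {x : Fin n → ℤ} :
    (fun i => (x i : ZMod 2)) ∈ torsionCode C ↔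
      (fun i => ((2 * x i : ℤ) : ZMod 4)) ∈ C := by
  rw [← toBinary_intCast, toBinary_mem_torsionCode_iff]
  simp only [Int.cast_mul, Int.cast_ofNat]
  rfl

theorem toBinary_surjective : Function.Surjective (toBinary (n := n)) := fun b => by
  choose c hc using fun i => ZMod.castHom_surjective (by norm_num : (2 : ℕ) ∣ 4) (b i)
  exact ⟨c, funext hc⟩

theorem two_smul_mem_dualZ4_iff {c : Fin n → ZMod 4} :
    (2 : ZMod 4) • c ∈ dualZ4 C ↔ ∀ b ∈ residueCode C, ∑ i, toBinary c i * b i = 0 := by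
  have hzero : ∀ a : ZMod 4, 2 * a = 0 ↔
      ZMod.castHom (by norm_num : (2 : ℕ) ∣ 4) (ZMod 2) a = 0 := by decide
  have hpair (d : Fin n → ZMod 4) :
      ∑ i, ((2 : ZMod 4) • c) i * d i = 0 ↔ ∑ i, toBinary c i * toBinary d i = 0 := by
    simp only [Pi.smul_apply, smul_eq_mul, mul_assoc, ← Finset.mul_sum, hzero, map_sum, map_mul,
      toBinary]
  simp only [dualZ4, Set.mem_ofPred_eq, hpair]
  exact ⟨by rintro h _ ⟨d, hd, rfl⟩; exact h d hd, fun h d hd => h _ ⟨d, hd, rfl⟩⟩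

theorem torsionCode_eq_dualCode (hsd : (C : Set (Fin n → ZMod 4)) = dualZ4 C)
    {B : Submodule (ZMod 2) (Fin n → ZMod 2)}
    (hB : (B : Set (Fin n → ZMod 2)) = residueCode C) : torsionCode C = dualCode B := by
  ext b
  obtain ⟨c, rfl⟩ := toBinary_surjective b
  calc toBinary c ∈ torsionCode C ↔ (2 : ZMod 4) • c ∈ (C : Set (Fin n → ZMod 4)) :=
        toBinary_mem_torsionCode_iff
    _ ↔ ∀ b ∈ (B : Set (Fin n → ZMod 2)), ∑ i, toBinary c i * b i = 0 := by
        rw [hsd, two_smul_mem_dualZ4_iff, hB]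

end TorsionCode

section MinimumNorm

variable {n : ℕ} {C : Submodule (ZMod 4) (Fin n → ZMod 4)}

theorem hammingNorm_intCast_le_sum_sq (x : Fin n → ℤ) :
    (hammingNorm (fun i => (x i : ZMod 2)) : ℤ) ≤ ∑ i, x i ^ 2 := by
  rw [hammingNorm, Finset.natCast_card_filter]
  refine Finset.sum_le_sum fun i _ => ?_
  split_ifs with h
  · have hi : x i ≠ 0 := fun h₀ => h (by simp [h₀])
    exact Int.add_one_le_iff.2 (sq_pos_of_ne_zero hi)
  · positivity

theorem exists_eq_two_mul_of_intCast_eq_zero {x : Fin n → ℤ}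
    (hx : (fun i => (x i : ZMod 2)) = 0) : ∃ y : Fin n → ℤ, x = fun i => 2 * y i := by
  choose y hy using fun i => (ZMod.intCast_zmod_eq_zero_iff_dvd (x i) 2).1 (congrFun hx i)
  exact ⟨y, funext hy⟩

theorem le_normOf_of_mem_constructionA4 {r : ℕ} (hr : r ≤ 4)
    (hres : ∀ b ∈ residueCode C, b ≠ 0 → 4 * r ≤ hammingNorm b)
    (htor : ∀ b ∈ torsionCode C, b ≠ 0 → r ≤ hammingNorm b)
    {v : EuclideanSpace ℝ (Fin n)} (hv : v ∈ constructionA4 C) (hv₀ : v ≠ 0) :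
    (r : ℝ) ≤ normOf v := by
  obtain ⟨x, hx, rfl⟩ := mem_constructionA4_iff.1 hv
  rw [normOf_halfVec, le_div_iff₀' four_pos]
  suffices h : (4 * r : ℤ) ≤ ∑ i, x i ^ 2 by exact_mod_cast h
  obtain hx₂ | hx₂ := ne_or_eq (fun i => (x i : ZMod 2)) 0
  · have hb := hres _ ⟨_, hx, (toBinary_intCast x).symm⟩ hx₂
    exact le_trans (mod_cast hb) (hammingNorm_intCast_le_sum_sq x)
  obtain ⟨y, rfl⟩ := exists_eq_two_mul_of_intCast_eq_zero hx₂
  simp only [mul_pow, ← Finset.mul_sum]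
  suffices h : (r : ℤ) ≤ ∑ i, y i ^ 2 by linarith
  obtain hy₂ | hy₂ := ne_or_eq (fun i => (y i : ZMod 2)) 0
  · have hb := htor _ (intCast_mem_torsionCode_iff.2 hx) hy₂
    exact le_trans (mod_cast hb) (hammingNorm_intCast_le_sum_sq y)
  obtain ⟨z, rfl⟩ := exists_eq_two_mul_of_intCast_eq_zero hy₂
  obtain ⟨i, hi⟩ : ∃ i, z i ≠ 0 := by
    by_contra! hz
    exact hv₀ (by ext i; simp [halfVec, hz])
  calc (r : ℤ) ≤ 4 := mod_cast hr
    _ ≤ (2 * z i) ^ 2 := by nlinarith [sq_pos_of_ne_zero hi]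
    _ ≤ ∑ j, (2 * z j) ^ 2 := Finset.single_le_sum (f := fun j => (2 * z j) ^ 2)
        (fun j _ => sq_nonneg _) (Finset.mem_univ i)

end MinimumNorm

section KissingNumber

variable {n : ℕ} {C : Submodule (ZMod 4) (Fin n → ZMod 4)}

/-- The words with entries in `{0, 1, -1}` whose reduction modulo 2 is `c`. -/
def signLifts (c : Fin n → ZMod 2) : Finset (Fin n → ℤ) :=
  Fintype.piFinset fun i => if c i = 0 then {0} else {1, -1}

theorem card_signLifts (c : Fin n → ZMod 2) : (signLifts c).card = 2 ^ hammingNorm c := by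
  have hcard (i : Fin n) : (if c i = 0 then {0} else {1, -1} : Finset ℤ).card =
      2 ^ (if c i ≠ 0 then 1 else 0) := by
    split_ifs <;> simp_all
  rw [signLifts, Fintype.card_piFinset]
  simp only [hcard]
  rw [Finset.prod_pow_eq_pow_sum, ← Finset.card_filter]
  rfl

theorem apply_cases_of_mem_signLifts {c : Fin n → ZMod 2} {x : Fin n → ℤ} (hx : x ∈ signLifts c)
    (i : Fin n) : c i = 0 ∧ x i = 0 ∨ c i = 1 ∧ (x i = 1 ∨ x i = -1) := by
  have hxi := Fintype.mem_piFinset.1 hx i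
  obtain h | h : c i = 0 ∨ c i = 1 := by generalize c i = a; revert a; decide
  · exact .inl ⟨h, by simpa [h] using hxi⟩
  · exact .inr ⟨h, by simpa [h] using hxi⟩

theorem intCast_eq_of_mem_signLifts {c : Fin n → ZMod 2} {x : Fin n → ℤ} (hx : x ∈ signLifts c) :
    (fun i => (x i : ZMod 2)) = c := by
  funext i
  rcases apply_cases_of_mem_signLifts hx i with ⟨hc, h⟩ | ⟨hc, h | h⟩ <;> simp [hc, h]

theorem sum_sq_of_mem_signLifts {c : Fin n → ZMod 2} {x : Fin n → ℤ} (hx : x ∈ signLifts c) :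
    ∑ i, x i ^ 2 = hammingNorm c := by
  rw [hammingNorm, Finset.natCast_card_filter]
  refine Finset.sum_congr rfl fun i _ => ?_
  rcases apply_cases_of_mem_signLifts hx i with ⟨hc, h⟩ | ⟨hc, h | h⟩ <;> simp [hc, h]

theorem halfVec_two_mul_mem_constructionA4 {c : Fin n → ZMod 2} (hc : c ∈ torsionCode C)
    {x : Fin n → ℤ} (hx : x ∈ signLifts c) : halfVec (fun i => 2 * x i) ∈ constructionA4 C := by
  rw [← intCast_eq_of_mem_signLifts hx] at hc
  exact mem_constructionA4_iff.2 ⟨_, intCast_mem_torsionCode_iff.1 hc, rfl⟩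

theorem normOf_halfVec_two_mul {c : Fin n → ZMod 2} {x : Fin n → ℤ}
    (hx : x ∈ signLifts c) : normOf (halfVec fun i => 2 * x i) = hammingNorm c := by
  rw [normOf_halfVec]
  simp only [mul_pow, ← Finset.mul_sum, sum_sq_of_mem_signLifts hx]
  push_cast
  ring

theorem two_pow_mul_weightCount_torsionCode_le (C : Submodule (ZMod 4) (Fin n → ZMod 4)) (w : ℕ) :
    2 ^ w * weightCount (torsionCode C) w ≤ numVecsOfNorm (constructionA4 C) w := by
  classical
  let W : Finset (Fin n → ZMod 2) :=
    Finset.univ.filter fun c => c ∈ torsionCode C ∧ hammingNorm c = w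
  have hdisj : (W : Set (Fin n → ZMod 2)).PairwiseDisjoint signLifts := by
    intro c _ d _ hcd
    refine Finset.disjoint_left.2 fun x hxc hxd => hcd ?_
    rw [← intCast_eq_of_mem_signLifts hxc, intCast_eq_of_mem_signLifts hxd]
  have hcard : (W.biUnion signLifts).card = 2 ^ w * weightCount (torsionCode C) w := by
    have hw : ∀ c ∈ W, (signLifts c).card = 2 ^ w := fun c hc => by
      rw [card_signLifts, (Finset.mem_filter.1 hc).2.2]
    rw [Finset.card_biUnion hdisj, Finset.sum_const_nat hw, mul_comm, weightCount_eq_card]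
  have hinj : Function.Injective fun x : Fin n → ℤ => halfVec fun i => 2 * x i := fun x y h =>
    funext fun i => mul_left_cancel₀ two_ne_zero (congrFun (halfVec_injective h) i)
  rw [← hcard, ← Finset.card_image_of_injective _ hinj, ← Set.ncard_coe_finset]
  refine Set.ncard_le_ncard ?_ (finite_setOf_mem_constructionA4_normOf_eq C w)
  intro v hv
  obtain ⟨x, hx, rfl⟩ := Finset.mem_image.1 hv
  obtain ⟨c, hc, hxc⟩ := Finset.mem_biUnion.1 hx
  obtain ⟨-, hcC, rfl⟩ := Finset.mem_filter.1 hc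
  exact ⟨halfVec_two_mul_mem_constructionA4 hcC hxc, normOf_halfVec_two_mul hxc⟩

end KissingNumber

theorem constructionA4_length37 {C : Submodule (ZMod 4) (Fin 37 → ZMod 4)}
    (hsd : (C : Set (Fin 37 → ZMod 4)) = dualZ4 C)
    (hres : ∃ B : Submodule (ZMod 2) (Fin 37 → ZMod 2),
      (B : Set (Fin 37 → ZMod 2)) = residueCode C ∧
      Module.finrank (ZMod 2) B = 6 ∧ IsDoublyEven B ∧
      HasMinWeight (B : Set (Fin 37 → ZMod 2)) 12)
    (htor : HasMinWeight (torsionCode C) 3) :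
    IsUnimodularLattice (constructionA4 C) ∧ IsOddLattice (constructionA4 C) ∧
      HasMinNorm (constructionA4 C) 3 ∧ 1120 ≤ numVecsOfNorm (constructionA4 C) 3 := by
  obtain ⟨B, hB, hdim, hde, hmin⟩ := hres
  have hdual := torsionCode_eq_dualCode hsd hB
  obtain ⟨b, hbB, -, hb⟩ := hmin.1
  have hcount : weightCount (torsionCode C) 3 = 140 := by
    rw [hdual] at htor ⊢
    exact weightCount_dualCode_three hdim hde (htor.weightCount_eq_zero one_ne_zero (by norm_num))
      (htor.weightCount_eq_zero two_ne_zero (by norm_num)) hbB hb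
  have hkiss : 1120 ≤ numVecsOfNorm (constructionA4 C) 3 := by
    simpa [hcount] using two_pow_mul_weightCount_torsionCode_le C 3
  obtain ⟨v, hv, hv₃⟩ : {v ∈ constructionA4 C | normOf v = 3}.Nonempty :=
    Set.nonempty_of_ncard_ne_zero (Nat.ne_zero_of_lt hkiss)
  have hv₀ : v ≠ 0 := by
    rintro rfl
    simp [normOf] at hv₃
  refine ⟨isUnimodularLattice_constructionA4 hsd, ⟨v, hv, 3, by decide, mod_cast hv₃⟩,
    ⟨⟨v, hv, hv₀, hv₃⟩, ?_⟩, hkiss⟩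
  rintro _ ⟨u, hu, hu₀, rfl⟩
  exact mod_cast le_normOf_of_mem_constructionA4 (r := 3) (by norm_num)
    (fun c hc => (hB ▸ hmin).le_hammingNorm hc) (fun c hc => htor.le_hammingNorm hc) hu hu₀
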